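/- arXiv:1403.5413 — 4 statements merged into one kernel-verified Lean document; each statement's English description precedes it below -/
import Mathlib

section
/- Let p ∈ (1;2) and α ∈ (p−1; 1). There exists a constant C > 0 depending only on p and α such that the following holds. Let a < b, y₀ ∈ ℝ, let x : [a;b] → ℝ be continuous with finite p-variation, and let F : ℝ → ℝ satisfy |F(u) − F(v)| ≤ K·|u − v|^α for all u, v ∈ ℝ, where K ≥ 0. Then there exists a function y : [a;b] → ℝ of finite p-variation with y(t) = y₀ + ∫_a^t F(y(s)) dx(s) (Riemann–Stieltjes integral) for all t ∈ [a;b], and moreover |y(a)| + ‖y‖_{p-var,[a;b]} ≤ R, where R > 0 is the least positive solution of the equation R = C·K·‖x‖_{p-var,[a;b]}·R^α + |y₀| + |F(0)|·‖x‖_{p-var,[a;b]}. -/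
open Filter Set

/-- Truncated variation of `f` on `[a;b]` with truncation parameter `δ`. -/
noncomputable def truncVar (f : ℝ → ℝ) (δ a b : ℝ) : ENNReal :=
  ⨆ (n : ℕ) (t : Fin (n + 1) → ℝ) (_ : StrictMono t)
    (_ : ∀ i, t i ∈ Set.Icc a b),
    ∑ i : Fin n, ENNReal.ofReal (|f (t i.succ) - f (t i.castSucc)| - δ)

/-- p-variation of `f` on `[a;b]`. -/
noncomputable def pVar (f : ℝ → ℝ) (p a b : ℝ) : ENNReal :=
  ⨆ (n : ℕ) (t : Fin (n + 1) → ℝ) (_ : StrictMono t)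
    (_ : ∀ i, t i ∈ Set.Icc a b),
    ∑ i : Fin n, ENNReal.ofReal (|f (t i.succ) - f (t i.castSucc)| ^ p)

/-- The p-variation norm `(V^p(f,[a;b]))^{1/p}`. -/
noncomputable def pVarNorm (f : ℝ → ℝ) (p a b : ℝ) : ℝ :=
  (pVar f p a b).toReal ^ (1 / p)

/-- Oscillation norm `sup_{a ≤ s < t ≤ b} |f t - f s|`. -/
noncomputable def oscNorm (f : ℝ → ℝ) (a b : ℝ) : ℝ :=
  sSup {x | ∃ s ∈ Set.Icc a b, ∃ t ∈ Set.Icc a b, s < t ∧ x = |f t - f s|}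

/-- Sup norm `sup_{a ≤ t ≤ b} |f t|`. -/
noncomputable def supNorm (f : ℝ → ℝ) (a b : ℝ) : ℝ :=
  sSup {x | ∃ t ∈ Set.Icc a b, x = |f t|}

/-- `I` is the Riemann–Stieltjes integral `∫_a^b f dg`. -/
def RSIntegral (f g : ℝ → ℝ) (a b : ℝ) (I : ℝ) : Prop :=
  ∀ ε > (0 : ℝ), ∃ δ > (0 : ℝ), ∀ (n : ℕ) (t : Fin (n + 1) → ℝ) (ξ : Fin n → ℝ),
    StrictMono t → t 0 = a → t (Fin.last n) = b →
    (∀ i : Fin n, t i.castSucc ≤ ξ i ∧ ξ i ≤ t i.succ) →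
    (∀ i : Fin n, t i.succ - t i.castSucc < δ) →
    |∑ i : Fin n, f (ξ i) * (g (t i.succ) - g (t i.castSucc)) - I| < ε

/-- `f` is regulated on `[a;b]`: all the relevant one-sided limits exist and are finite. -/
def Regulated (f : ℝ → ℝ) (a b : ℝ) : Prop :=
  (∃ L : ℝ, Tendsto f (nhdsWithin a (Set.Ioi a)) (nhds L)) ∧
  (∃ L : ℝ, Tendsto f (nhdsWithin b (Set.Iio b)) (nhds L)) ∧
  ∀ x ∈ Set.Ioo a b,
    (∃ L : ℝ, Tendsto f (nhdsWithin x (Set.Iio x)) (nhds L)) ∧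
    (∃ L : ℝ, Tendsto f (nhdsWithin x (Set.Ioi x)) (nhds L))

/-- `f` and `g` have no common points of discontinuity on `[a;b]`. -/
def NoCommonDiscont (f g : ℝ → ℝ) (a b : ℝ) : Prop :=
  ∀ x ∈ Set.Icc a b,
    ContinuousWithinAt f (Set.Icc a b) x ∨ ContinuousWithinAt g (Set.Icc a b) x

noncomputable def sewC (θ : ℝ) : ℝ := 2 / (1 - 2 ^ (1 - θ))

lemma sewC_den {θ : ℝ} (hθ : 1 < θ) : 0 < 1 - (2:ℝ) ^ (1 - θ) := by
  have : (2:ℝ) ^ (1 - θ) < 1 := Real.rpow_lt_one_of_one_lt_of_neg (by norm_num) (by linarith)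
  linarith

lemma sewC_pos {θ : ℝ} (hθ : 1 < θ) : 0 < sewC θ := div_pos (by norm_num) (sewC_den hθ)

lemma sewing {θ : ℝ} (hθ : 1 < θ) (J ω : ℕ → ℕ → ℝ) (D : ℝ) (hD : 0 ≤ D)
    (h0 : ∀ i j, i ≤ j → 0 ≤ ω i j)
    (hsup : ∀ i j k, i ≤ j → j ≤ k → ω i j + ω j k ≤ ω i k)
    (hJ0 : ∀ i, J i i = 0) (hJ1 : ∀ i, J i (i + 1) = 0)
    (hδ : ∀ i j k, i ≤ j → j ≤ k → |J i k - J i j - J j k| ≤ D * ω i k ^ θ) :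
    ∀ n i, |J i (i + n)| ≤ sewC θ * D * ω i (i + n) ^ θ := by
  intro n
  induction n using Nat.strong_induction_on with
  | _ n ih =>
  intro i
  have hC := sewC_pos hθ
  rcases Nat.eq_zero_or_pos n with rfl | hn
  · simp only [Nat.add_zero, hJ0, abs_zero]
    have := Real.rpow_nonneg (h0 i i le_rfl) θ
    positivity
  set W := ω i (i + n) with hW
  have hW0 : 0 ≤ W := h0 _ _ (by omega)
  have hz : ∀ k, ω k k = 0 := fun k => by
    have := hsup k k k le_rfl le_rfl
    have := h0 k k le_rfl
    linarith
  -- choose split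
  obtain ⟨m, hmn, hm1, hm2⟩ : ∃ m, m < n ∧ ω i (i + m) ≤ W / 2 ∧ ω (i + m + 1) (i + n) ≤ W / 2 := by
    classical
    let P : ℕ → Prop := fun m => ω i (i + m) ≤ W / 2
    have hP0 : P 0 := by simp only [P, Nat.add_zero, hz]; linarith
    let m := Nat.findGreatest P (n - 1)
    have hmP : P m := Nat.findGreatest_spec (P := P) (Nat.zero_le _) hP0
    have hmle : m ≤ n - 1 := Nat.findGreatest_le _
    refine ⟨m, by omega, hmP, ?_⟩
    by_cases hmn : m + 1 = n
    · have : i + m + 1 = i + n := by omega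
      rw [this, hz]; linarith
    · have hnP : ¬ P (m + 1) := Nat.findGreatest_is_greatest (P := P) (Nat.lt_succ_self m) (by omega)
      have h1 : W / 2 < ω i (i + (m + 1)) := not_le.mp hnP
      have h2 := hsup i (i + m + 1) (i + n) (by omega) (by omega)
      have h3 : i + (m + 1) = i + m + 1 := by omega
      rw [h3] at h1
      linarith
  have e1 := ih m hmn i
  have e2 := ih (n - m - 1) (by omega) (i + m + 1)
  have hh : i + m + 1 + (n - m - 1) = i + n := by omega
  rw [hh] at e2
  have d1 := hδ i (i + m) (i + n) (by omega) (by omega)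
  have d2 := hδ (i + m) (i + m + 1) (i + n) (by omega) (by omega)
  rw [hJ1, ← hW] at *
  have hmono : ω (i + m) (i + n) ≤ W := by
    have := hsup i (i + m) (i + n) (by omega) (by omega)
    have := h0 i (i + m) (by omega)
    linarith
  have hp : ∀ z, 0 ≤ z → z ≤ W / 2 → z ^ θ ≤ W ^ θ * 2 ^ (-θ) := by
    intro z hz hz2
    have := Real.rpow_le_rpow hz hz2 (by linarith : 0 ≤ θ)
    rwa [Real.div_rpow hW0 (by norm_num), div_eq_mul_inv, ← Real.rpow_neg (by norm_num)] at this
  have p1 := hp _ (h0 _ _ (by omega)) hm1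
  have p2 := hp _ (h0 _ _ (by omega)) hm2
  have p3 : ω (i + m) (i + n) ^ θ ≤ W ^ θ := Real.rpow_le_rpow (h0 _ _ (by omega)) hmono (by linarith)
  have q1 : sewC θ * D * ω i (i + m) ^ θ ≤ sewC θ * D * (W ^ θ * 2 ^ (-θ)) := by gcongr
  have q2 : sewC θ * D * ω (i + m + 1) (i + n) ^ θ ≤ sewC θ * D * (W ^ θ * 2 ^ (-θ)) := by gcongr
  have q3 : D * ω (i + m) (i + n) ^ θ ≤ D * W ^ θ := by gcongr
  have key : sewC θ * (2 * 2 ^ (-θ)) + 2 = sewC θ := by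
    have h2 : (2:ℝ) * 2 ^ (-θ) = 2 ^ (1 - θ) := by
      rw [sub_eq_add_neg, Real.rpow_add (by norm_num), Real.rpow_one]
    rw [h2, sewC]
    have := (sewC_den hθ).ne'
    field_simp
    ring
  have fin : sewC θ * D * W ^ θ = 2 * (sewC θ * D * (W ^ θ * 2 ^ (-θ))) + 2 * (D * W ^ θ) := by
    nth_rw 1 [← key]; ring
  rw [fin]
  rw [abs_le] at *
  constructor <;> linarith [e1.1, e1.2, e2.1, e2.2, d1.1, d1.2, d2.1, d2.2]

structure Ctrl (ω : ℝ → ℝ → ℝ) (a b : ℝ) : Prop where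
  nonneg : ∀ s t, a ≤ s → s ≤ t → t ≤ b → 0 ≤ ω s t
  sup : ∀ s u t, a ≤ s → s ≤ u → u ≤ t → t ≤ b → ω s u + ω u t ≤ ω s t

lemma Ctrl.mono {ω : ℝ → ℝ → ℝ} {a b : ℝ} (h : Ctrl ω a b) {s t u v : ℝ} (h1 : a ≤ s) (h2 : s ≤ u)
    (h3 : u ≤ v) (h4 : v ≤ t) (h5 : t ≤ b) : ω u v ≤ ω s t := by
  have a1 := h.sup s u t h1 h2 (h3.trans h4) h5
  have a2 := h.sup u v t (h1.trans h2) h3 h4 h5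
  have a3 := h.nonneg s u h1 h2 (by linarith)
  have a4 := h.nonneg v t (by linarith) h4 h5
  linarith

lemma Ctrl.restrict {ω : ℝ → ℝ → ℝ} {a b c d : ℝ} (h : Ctrl ω a b) (h1 : a ≤ c) (h2 : d ≤ b) :
    Ctrl ω c d :=
  ⟨fun s t hs hst ht => h.nonneg s t (h1.trans hs) hst (ht.trans h2),
   fun s u t hs hsu hut ht => h.sup s u t (h1.trans hs) hsu hut (ht.trans h2)⟩

lemma young {θ : ℝ} (hθ : 1 < θ) {y f x : ℝ → ℝ} {ω : ℝ → ℝ → ℝ} {s t D : ℝ}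
    (hω : Ctrl ω s t) (hD : 0 ≤ D)
    (hδ : ∀ u v w, s ≤ u → u ≤ v → v ≤ w → w ≤ t → |f v - f u| * |x w - x v| ≤ D * ω u w ^ θ)
    (τ : ℕ → ℝ) (hτ : Monotone τ) (h0 : τ 0 = s) (N : ℕ) (hN : τ N = t) (hle : ∀ k, τ k ≤ t)
    (hy : ∀ k, y (τ (k + 1)) - y (τ k) = f (τ k) * (x (τ (k + 1)) - x (τ k))) :
    |y t - y s - f s * (x t - x s)| ≤ sewC θ * D * ω s t ^ θ := by
  have hge : ∀ k, s ≤ τ k := fun k => h0 ▸ hτ (Nat.zero_le k)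
  have := sewing hθ (fun i j => y (τ j) - y (τ i) - f (τ i) * (x (τ j) - x (τ i)))
    (fun i j => ω (τ i) (τ j)) D hD
    (fun i j hij => hω.nonneg _ _ (hge i) (hτ hij) (hle j))
    (fun i j k hij hjk => hω.sup _ _ _ (hge i) (hτ hij) (hτ hjk) (hle k))
    (fun i => by simp) (fun i => by simp only [hy]; ring)
    (fun i j k hij hjk => by
      have := hδ (τ i) (τ j) (τ k) (hge i) (hτ hij) (hτ hjk) (hle k)
      rw [← abs_mul] at this
      refine le_trans (le_of_eq ?_) this
      congr 1; ring) N 0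
  simpa [h0, hN] using this

/-! pVar -/

lemma pVar_le_of_forall {g : ℝ → ℝ} {p a b : ℝ} {B : ENNReal}
    (h : ∀ (n : ℕ) (t : Fin (n + 1) → ℝ), StrictMono t → (∀ i, t i ∈ Set.Icc a b) →
      ∑ i : Fin n, ENNReal.ofReal (|g (t i.succ) - g (t i.castSucc)| ^ p) ≤ B) :
    pVar g p a b ≤ B := by
  unfold pVar
  exact iSup_le fun n => iSup_le fun t => iSup_le fun h1 => iSup_le fun h2 => h n t h1 h2

lemma le_pVar {g : ℝ → ℝ} {p a b : ℝ} (n : ℕ) (t : Fin (n + 1) → ℝ) (h1 : StrictMono t)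
    (h2 : ∀ i, t i ∈ Set.Icc a b) :
    ∑ i : Fin n, ENNReal.ofReal (|g (t i.succ) - g (t i.castSucc)| ^ p) ≤ pVar g p a b := by
  unfold pVar
  exact le_iSup_of_le n (le_iSup_of_le t (le_iSup_of_le h1 (le_iSup_of_le h2 le_rfl)))

lemma pVar_mono {g : ℝ → ℝ} {p a b c d : ℝ} (h1 : a ≤ c) (h2 : d ≤ b) :
    pVar g p c d ≤ pVar g p a b :=
  pVar_le_of_forall fun n t ht hm => le_pVar n t ht fun i => ⟨h1.trans (hm i).1, (hm i).2.trans h2⟩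

lemma strictMono_cons {n : ℕ} {u : ℝ} {t : Fin (n + 1) → ℝ} (h : StrictMono t) (hu : u < t 0) :
    StrictMono (Fin.cons u t : Fin (n + 2) → ℝ) := by
  rw [Fin.strictMono_iff_lt_succ] at *
  intro i
  refine Fin.cases ?_ (fun j => ?_) i
  · simpa using hu
  · rw [← Fin.succ_castSucc]; simp only [Fin.cons_succ]
    have : ∀ (n : ℕ) (t : Fin (n + 1) → ℝ) (h : StrictMono t) (j : Fin n), t j.castSucc < t j.succ :=
      fun n t h j => h Fin.castSucc_lt_succ
    exact this _ _ (Fin.strictMono_iff_lt_succ.2 h) j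

lemma add_pVar_le {g : ℝ → ℝ} {p u v w : ℝ} (hp : 0 < p) (h1 : u ≤ v) (h2 : v ≤ w) :
    ENNReal.ofReal (|g v - g u| ^ p) + pVar g p v w ≤ pVar g p u w := by
  rcases h1.eq_or_lt with rfl | h1
  · simp [Real.zero_rpow hp.ne']
  have key : ∀ (n : ℕ) (t : Fin (n + 1) → ℝ), StrictMono t → (∀ i, t i ∈ Set.Icc v w) → t 0 = v →
      ENNReal.ofReal (|g v - g u| ^ p) +
      ∑ i : Fin n, ENNReal.ofReal (|g (t i.succ) - g (t i.castSucc)| ^ p) ≤ pVar g p u w := by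
    intro n t ht hm h0
    have := le_pVar (g := g) (p := p) (a := u) (b := w) (n + 1) (Fin.cons u t)
      (strictMono_cons ht (by rw [h0]; exact h1)) (fun i => by
        refine Fin.cases ?_ (fun j => ?_) i
        · simp [h1.le.trans h2]
        · simp only [Fin.cons_succ]
          exact ⟨h1.le.trans (hm j).1, (hm j).2⟩)
    rw [Fin.sum_univ_succ] at this
    simpa [← Fin.succ_castSucc, h0] using this
  have key0 : ENNReal.ofReal (|g v - g u| ^ p) ≤ pVar g p u w := by
    have := key 0 (fun _ => v) (Subsingleton.strictMono (α := Fin 1) _) (fun _ => ⟨le_rfl, h2⟩) rfl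
    simpa using this
  refine add_le_of_le_tsub_left_of_le key0 (pVar_le_of_forall fun n t ht hm => ?_)
  refine ENNReal.le_sub_of_add_le_left ENNReal.ofReal_ne_top ?_
  rcases (hm 0).1.eq_or_lt with h0 | h0
  · exact key n t ht hm h0.symm
  · have := key (n + 1) (Fin.cons v t) (strictMono_cons ht h0) (fun i => by
        refine Fin.cases ?_ (fun j => ?_) i
        · simp [h2]
        · simpa only [Fin.cons_succ] using hm j) (by simp)
    refine le_trans ?_ this
    gcongr
    rw [Fin.sum_univ_succ]
    simp

lemma pVar_superadd {g : ℝ → ℝ} {p s u w : ℝ} (hp : 0 < p) (h1 : s ≤ u) (h2 : u ≤ w) :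
    pVar g p s u + pVar g p u w ≤ pVar g p s w := by
  have key : ∀ (n : ℕ) (t : Fin (n + 1) → ℝ), StrictMono t → (∀ i, t i ∈ Set.Icc s u) →
      ∑ i : Fin n, ENNReal.ofReal (|g (t i.succ) - g (t i.castSucc)| ^ p) + pVar g p u w
        ≤ pVar g p (t 0) w := by
    intro n
    induction n with
    | zero => intro t _ hm; simpa using pVar_mono (hm 0).2 le_rfl
    | succ n ih =>
      intro t ht hm
      have h3 := ih (fun i => t i.succ) (fun i j hij => ht (Fin.succ_lt_succ_iff.2 hij))
        (fun i => hm _)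
      have h4 := add_pVar_le (g := g) (p := p) (u := t 0) (v := t (Fin.succ 0)) (w := w) hp
        (ht.monotone (Fin.zero_le _)) ((hm _).2.trans h2)
      rw [Fin.sum_univ_succ, add_assoc]
      refine le_trans ?_ h4
      rw [Fin.castSucc_zero]
      gcongr
      simpa only [Fin.succ_castSucc] using h3
  by_cases hw : pVar g p s w = ⊤
  · rw [hw]; exact le_top
  have hw2 : pVar g p u w ≤ pVar g p s w := pVar_mono h1 le_rfl
  refine add_le_of_le_tsub_right_of_le hw2 (pVar_le_of_forall fun n t ht hm => ?_)
  refine ENNReal.le_sub_of_add_le_right (ne_top_of_le_ne_top hw hw2) ?_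
  exact (key n t ht hm).trans (pVar_mono (hm 0).1 le_rfl)

noncomputable def W (g : ℝ → ℝ) (p s t : ℝ) : ℝ := (pVar g p s t).toReal

lemma W_ctrl {g : ℝ → ℝ} {p a b : ℝ} (hp : 0 < p) (h : pVar g p a b < ⊤) : Ctrl (W g p) a b := by
  refine ⟨fun s t _ _ _ => ENNReal.toReal_nonneg, fun s u t h1 h2 h3 h4 => ?_⟩
  have hs : pVar g p s t ≠ ⊤ := ne_top_of_le_ne_top h.ne (pVar_mono h1 h4)
  unfold W
  rw [← ENNReal.toReal_add (ne_top_of_le_ne_top hs (pVar_mono le_rfl h3))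
    (ne_top_of_le_ne_top hs (pVar_mono h2 le_rfl))]
  exact ENNReal.toReal_mono hs (pVar_superadd hp h2 h3)

lemma W_incr {g : ℝ → ℝ} {p a b s t : ℝ} (hp : 0 < p) (h : pVar g p a b < ⊤) (h1 : a ≤ s)
    (h2 : s ≤ t) (h3 : t ≤ b) : |g t - g s| ≤ W g p s t ^ (1 / p) := by
  have hs : pVar g p s t ≠ ⊤ := ne_top_of_le_ne_top h.ne (pVar_mono h1 h3)
  have h4 := (le_self_add).trans (add_pVar_le (g := g) hp h2 le_rfl)
  have h5 : |g t - g s| ^ p ≤ W g p s t := by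
    rw [W]; exact (ENNReal.ofReal_le_iff_le_toReal hs).1 h4
  have := Real.rpow_le_rpow (by positivity) h5 (by positivity : 0 ≤ 1 / p)
  rwa [← Real.rpow_mul (abs_nonneg _), mul_one_div_cancel hp.ne', Real.rpow_one] at this

lemma Ctrl.sum_le {ω : ℝ → ℝ → ℝ} {a b : ℝ} (h : Ctrl ω a b) : ∀ (n : ℕ) (t : Fin (n + 1) → ℝ),
    Monotone t → (∀ i, t i ∈ Set.Icc a b) →
    ∑ i : Fin n, ω (t i.castSucc) (t i.succ) ≤ ω (t 0) b := by
  intro n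
  induction n with
  | zero => intro t _ hm; simpa using h.nonneg _ _ (hm 0).1 (hm 0).2 le_rfl
  | succ n ih =>
    intro t ht hm
    have h3 := ih (fun i => t i.succ) (fun i j hij => ht (Fin.succ_le_succ_iff.2 hij))
        (fun i => hm _)
    have h4 := h.sup (t 0) (t (Fin.succ 0)) b (hm _).1 (ht (Fin.zero_le _)) (hm _).2 le_rfl
    rw [Fin.sum_univ_succ, Fin.castSucc_zero]
    simp only [Fin.succ_castSucc] at h3
    linarith

lemma pVar_le_ctrl {g : ℝ → ℝ} {p a b : ℝ} {ω : ℝ → ℝ → ℝ} (h : Ctrl ω a b)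
    (hg : ∀ s t, a ≤ s → s ≤ t → t ≤ b → |g t - g s| ^ p ≤ ω s t) :
    pVar g p a b ≤ ENNReal.ofReal (ω a b) := by
  refine pVar_le_of_forall fun n t ht hm => ?_
  rw [← ENNReal.ofReal_sum_of_nonneg (fun i _ => by positivity)]
  refine ENNReal.ofReal_le_ofReal ?_
  calc _ ≤ ∑ i : Fin n, ω (t i.castSucc) (t i.succ) :=
        Finset.sum_le_sum fun i _ => hg _ _ (hm _).1 (ht.monotone Fin.castSucc_lt_succ.le) (hm _).2
    _ ≤ ω (t 0) b := h.sum_le n t ht.monotone hm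
    _ ≤ ω a b := h.mono le_rfl (hm 0).1 (hm 0).2 le_rfl le_rfl

structure Approx (x y f : ℝ → ℝ) (ω : ℝ → ℝ → ℝ) (K β A M0 a c : ℝ) : Prop where
  ctrl : Ctrl ω a c
  tot : ω a c ≤ A
  hf : ∀ s u, a ≤ s → s ≤ u → u ≤ c → |f u - f s| ≤ K * ω s u ^ β
  bd : ∀ s, a ≤ s → s ≤ c → |f s| ≤ M0
  part : ∀ s t, a ≤ s → s ≤ t → t ≤ c → ∃ τ : ℕ → ℝ, Monotone τ ∧ τ 0 = s ∧ (∃ N, τ N = t) ∧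
    (∀ k, τ k ≤ t) ∧ ∀ k, y (τ (k + 1)) - y (τ k) = f (τ k) * (x (τ (k + 1)) - x (τ k))

lemma approx_incr {x y f : ℝ → ℝ} {ω : ℝ → ℝ → ℝ} {K β A M0 a c p : ℝ}
    (h : Approx x y f ω K β A M0 a c) (hK : 0 ≤ K) (hA : 0 < A) (hβ : 0 < β) (hp : 0 < p)
    (hθ : 1 < β + 1 / p) (hx : pVar x p a c < ⊤) {s t : ℝ} (h1 : a ≤ s) (h2 : s ≤ t) (h3 : t ≤ c) :
    |y t - y s| ≤ (M0 + sewC (β + 1 / p) * 2 ^ (β + 1 / p) * K * A ^ β) * W x p s t ^ (1 / p) := by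
  obtain ⟨τ, hτ, hτ0, ⟨N, hN⟩, hle, hy⟩ := h.part s t h1 h2 h3
  set B := W x p s t with hB
  have hxc := W_ctrl hp hx
  have hB0 : 0 ≤ B := hxc.nonneg _ _ h1 h2 h3
  have hip : 0 < 1 / p := by positivity
  have hc : Ctrl (fun u v => ω u v / A + W x p u v / B) s t := by
    refine ⟨fun u v hu huv hv => ?_, fun u v w hu huv hvw hw => ?_⟩
    · have := h.ctrl.nonneg u v (by linarith) huv (by linarith)
      have := hxc.nonneg u v (by linarith) huv (by linarith)
      positivity
    · have e1 := h.ctrl.sup u v w (by linarith) huv hvw (by linarith)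
      have e2 := hxc.sup u v w (by linarith) huv hvw (by linarith)
      have e3 := div_le_div_of_nonneg_right e1 hA.le
      have e4 := div_le_div_of_nonneg_right e2 hB0
      rw [add_div] at e3 e4
      linarith
  have hY := young hθ (y := y) (f := f) (x := x) hc (D := K * A ^ β * B ^ (1 / p)) (by positivity)
    (fun u v w hu huv hvw hw => by
      have n1 := h.ctrl.nonneg u w (by linarith) (by linarith) (by linarith)
      have n2 := hxc.nonneg u w (by linarith) (by linarith) (by linarith)
      have n3 := h.ctrl.nonneg u v (by linarith) (by linarith) (by linarith)
      have n4 := hxc.nonneg v w (by linarith) (by linarith) (by linarith)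
      have i1 : |f v - f u| ≤ K * ω u w ^ β := by
        refine (h.hf u v (by linarith) huv (by linarith)).trans ?_
        gcongr
        exact h.ctrl.mono (by linarith) le_rfl huv hvw (by linarith)
      have i2 : |x w - x v| ≤ W x p u w ^ (1 / p) := by
        refine (W_incr hp hx (by linarith) hvw (by linarith)).trans ?_
        gcongr
        exact hxc.mono (by linarith) huv hvw le_rfl (by linarith)
      have j1 : ω u w = A * (ω u w / A) := by field_simp
      have j2 : W x p u w = B * (W x p u w / B) := by
        by_cases hB1 : B = 0
        · have : W x p u w ≤ B := hxc.mono h1 hu (huv.trans hvw) hw h3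
          rw [hB1] at this ⊢
          simp; linarith
        · field_simp
      have k1 : 0 ≤ ω u w / A := by positivity
      have k2 : 0 ≤ W x p u w / B := by positivity
      calc |f v - f u| * |x w - x v| ≤ (K * ω u w ^ β) * W x p u w ^ (1 / p) := by gcongr
        _ = (K * (A * (ω u w / A)) ^ β) * (B * (W x p u w / B)) ^ (1 / p) := by rw [← j1, ← j2]
        _ = K * A ^ β * B ^ (1 / p) * ((ω u w / A) ^ β * (W x p u w / B) ^ (1 / p)) := by
            rw [Real.mul_rpow hA.le k1, Real.mul_rpow hB0 k2]; ring
        _ ≤ K * A ^ β * B ^ (1 / p) * ((ω u w / A + W x p u w / B) ^ β *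
              (ω u w / A + W x p u w / B) ^ (1 / p)) := by gcongr <;> linarith
        _ = _ := by rw [← Real.rpow_add_of_nonneg (by positivity) hβ.le hip.le])
    τ hτ hτ0 N hN hle hy
  have hωt : ω s t / A + W x p s t / B ≤ 2 := by
    have t1 : ω s t / A ≤ 1 := by
      rw [div_le_one hA]
      exact (h.ctrl.mono le_rfl h1 h2 h3 le_rfl).trans h.tot
    have t2 : W x p s t / B ≤ 1 := div_self_le_one _
    linarith
  have hC := sewC_pos hθ
  have hn : 0 ≤ ω s t / A + W x p s t / B := hc.nonneg s t le_rfl h2 le_rfl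
  have hY2 : |y t - y s - f s * (x t - x s)| ≤
      sewC (β + 1 / p) * (K * A ^ β * B ^ (1 / p)) * 2 ^ (β + 1 / p) := by
    refine hY.trans ?_
    gcongr
  have hfx : |f s * (x t - x s)| ≤ M0 * B ^ (1 / p) := by
    rw [abs_mul]
    have := h.bd s h1 (by linarith)
    have := W_incr hp hx h1 h2 h3
    have : 0 ≤ M0 := (abs_nonneg _).trans (h.bd s h1 (by linarith))
    gcongr
  calc |y t - y s| = |(y t - y s - f s * (x t - x s)) + f s * (x t - x s)| := by congr 1; ring
    _ ≤ _ := abs_add_le _ _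
    _ ≤ _ := add_le_add hY2 hfx
    _ = _ := by ring

lemma approx_rs {x y f : ℝ → ℝ} {ω : ℝ → ℝ → ℝ} {K β γ A M0 a c p η : ℝ}
    (h : Approx x y f ω K β A M0 a c) (hK : 0 ≤ K) (hβ : 0 < β) (hp : 0 < p)
    (hγ : 0 < γ) (hγp : γ * p ≤ 1) (hη : 0 ≤ η)
    (hθ : 1 < β + γ) (hx : pVar x p a c < ⊤) {s t ξ : ℝ} (h1 : a ≤ s) (h2 : s ≤ t) (h3 : t ≤ c)
    (hosc : ∀ u v, s ≤ u → u ≤ v → v ≤ t → |x v - x u| ≤ η) (hξ1 : s ≤ ξ) (hξ2 : ξ ≤ t) :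
    |y t - y s - f ξ * (x t - x s)| ≤
      (sewC (β + γ) + 1) * (K * η ^ (1 - γ * p)) * (ω s t + W x p s t) ^ (β + γ) := by
  obtain ⟨τ, hτ, hτ0, ⟨N, hN⟩, hle, hy⟩ := h.part s t h1 h2 h3
  have hxc := W_ctrl hp hx
  have hc : Ctrl (fun u v => ω u v + W x p u v) s t := by
    refine ⟨fun u v hu huv hv => ?_, fun u v w hu huv hvw hw => ?_⟩
    · have := h.ctrl.nonneg u v (by linarith) huv (by linarith)
      have := hxc.nonneg u v (by linarith) huv (by linarith)
      positivity
    · have e1 := h.ctrl.sup u v w (by linarith) huv hvw (by linarith)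
      have e2 := hxc.sup u v w (by linarith) huv hvw (by linarith)
      linarith
  have hxi : ∀ u v, s ≤ u → u ≤ v → v ≤ t → |x v - x u| ≤ η ^ (1 - γ * p) * W x p u v ^ γ := by
    intro u v hu huv hv
    have e1 := hosc u v hu huv hv
    have e2 := W_incr hp hx (by linarith) huv (by linarith : v ≤ c)
    have e3 := Real.rpow_le_rpow (abs_nonneg _) e2 (by positivity : 0 ≤ γ * p)
    have n1 := hxc.nonneg u v (by linarith) huv (by linarith)
    rw [← Real.rpow_mul n1, show 1 / p * (γ * p) = γ by field_simp] at e3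
    calc |x v - x u| = |x v - x u| ^ (1 - γ * p) * |x v - x u| ^ (γ * p) := by
          rw [← Real.rpow_add_of_nonneg (abs_nonneg _) (by linarith) (by positivity)]; simp
      _ ≤ _ := by
        have : |x v - x u| ^ (1 - γ * p) ≤ η ^ (1 - γ * p) :=
          Real.rpow_le_rpow (abs_nonneg _) e1 (by linarith)
        gcongr
  have hprod : ∀ u v u' v' , s ≤ u → u ≤ v → v ≤ t → s ≤ u' → u' ≤ v' → v' ≤ t →
      ∀ r q, s ≤ r → r ≤ u → r ≤ u' → v ≤ q → v' ≤ q → q ≤ t →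
      |f v - f u| * |x v' - x u'| ≤ K * η ^ (1 - γ * p) * (ω r q + W x p r q) ^ (β + γ) := by
    intro u v u' v' hu huv hv hu' huv' hv' r q hr hru hru' hvq hvq' hq
    have n1 := h.ctrl.nonneg r q (by linarith) (by linarith) (by linarith)
    have n2 := hxc.nonneg r q (by linarith) (by linarith) (by linarith)
    have n3 := h.ctrl.nonneg u v (by linarith) (by linarith) (by linarith)
    have n4 := hxc.nonneg u' v' (by linarith) (by linarith) (by linarith)
    have i1 : |f v - f u| ≤ K * (ω r q + W x p r q) ^ β := by
      refine (h.hf u v (by linarith) huv (by linarith)).trans ?_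
      gcongr
      have := h.ctrl.mono (by linarith) hru huv hvq (by linarith)
      linarith
    have i2 : |x v' - x u'| ≤ η ^ (1 - γ * p) * (ω r q + W x p r q) ^ γ := by
      refine (hxi u' v' hu' huv' hv').trans ?_
      gcongr
      have := hxc.mono (by linarith) hru' huv' hvq' (by linarith)
      linarith
    calc _ ≤ (K * (ω r q + W x p r q) ^ β) * (η ^ (1 - γ * p) * (ω r q + W x p r q) ^ γ) := by gcongr
      _ = _ := by rw [Real.rpow_add_of_nonneg (by positivity) hβ.le hγ.le]; ring
  have hY := young hθ (y := y) (f := f) (x := x) hc (D := K * η ^ (1 - γ * p)) (by positivity)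
    (fun u v w hu huv hvw hw => hprod u v v w hu huv (by linarith) (by linarith) hvw hw u w hu
      le_rfl huv hvw le_rfl hw) τ hτ hτ0 N hN hle hy
  have hZ := hprod s ξ s t le_rfl hξ1 hξ2 le_rfl h2 le_rfl s t le_rfl le_rfl le_rfl hξ2 le_rfl le_rfl
  rw [← abs_mul] at hZ
  calc |y t - y s - f ξ * (x t - x s)| =
      |(y t - y s - f s * (x t - x s)) - (f ξ - f s) * (x t - x s)| := by congr 1; ring
    _ ≤ _ := abs_sub _ _
    _ ≤ _ := add_le_add hY hZ
    _ = _ := by ring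

noncomputable def eY (x F : ℝ → ℝ) (y₀ a h : ℝ) : ℕ → ℝ
  | 0 => y₀
  | (k + 1) => eY x F y₀ a h k +
      F (eY x F y₀ a h k) * (x (a + ((k + 1 : ℕ) : ℝ) * h) - x (a + (k : ℝ) * h))

noncomputable def eK (a h t : ℝ) : ℕ := ⌊(t - a) / h⌋₊

noncomputable def ey (x F : ℝ → ℝ) (y₀ a h t : ℝ) : ℝ :=
  eY x F y₀ a h (eK a h t) + F (eY x F y₀ a h (eK a h t)) * (x t - x (a + (eK a h t : ℝ) * h))

noncomputable def eσ (a h : ℝ) (m : ℕ) (t : ℝ) : ℝ := a + ((min (eK a h t) m : ℕ) : ℝ) * h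

lemma eK_eq {a h t : ℝ} (hh : 0 < h) {k : ℕ} (h1 : a + k * h ≤ t) (h2 : t < a + ((k + 1 : ℕ) : ℝ) * h) :
    eK a h t = k := by
  unfold eK
  have : 0 ≤ (k:ℝ) * h := by positivity
  rw [Nat.floor_eq_iff (div_nonneg (by linarith) hh.le), le_div_iff₀ hh, div_lt_iff₀ hh]
  push_cast at h2
  constructor <;> linarith

lemma eK_grid {a h : ℝ} (hh : 0 < h) (k : ℕ) : eK a h (a + k * h) = k :=
  eK_eq hh le_rfl (by push_cast; linarith)

lemma eK_le {a h t : ℝ} (hh : 0 < h) (ht : a ≤ t) : a + (eK a h t : ℝ) * h ≤ t := by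
  have := Nat.floor_le (div_nonneg (sub_nonneg.2 ht) hh.le)
  rw [le_div_iff₀ hh] at this
  unfold eK; linarith

lemma eK_lt {a h : ℝ} (t : ℝ) (hh : 0 < h) : t < a + (eK a h t : ℝ) * h + h := by
  have := Nat.lt_floor_add_one ((t - a) / h)
  rw [div_lt_iff₀ hh] at this
  unfold eK; linarith

lemma eK_mono {a h s t : ℝ} (hh : 0 < h) (hst : s ≤ t) : eK a h s ≤ eK a h t :=
  Nat.floor_mono (by gcongr)

lemma ey_grid {x F : ℝ → ℝ} {y₀ a h : ℝ} (hh : 0 < h) (k : ℕ) :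
    ey x F y₀ a h (a + k * h) = eY x F y₀ a h k := by
  simp [ey, eK_grid hh]

lemma ey_a {x F : ℝ → ℝ} {y₀ a h : ℝ} (hh : 0 < h) : ey x F y₀ a h a = y₀ := by
  have := ey_grid (x := x) (F := F) (y₀ := y₀) (a := a) hh 0
  simpa [eY] using this

lemma ey_cell {x F : ℝ → ℝ} {y₀ a h : ℝ} (hh : 0 < h) {k m : ℕ} (hkm : k ≤ m) {u v : ℝ}
    (h1 : a + k * h ≤ u) (h2 : u < v) (h3 : v ≤ a + ((k + 1 : ℕ) : ℝ) * h) :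
    ey x F y₀ a h v - ey x F y₀ a h u = F (ey x F y₀ a h (eσ a h m u)) * (x v - x u) := by
  have hu : eK a h u = k := eK_eq hh h1 (h2.trans_le h3)
  rw [eσ, hu, min_eq_left hkm, ey_grid hh]
  have e1 : ey x F y₀ a h u = eY x F y₀ a h k + F (eY x F y₀ a h k) * (x u - x (a + k * h)) := by
    rw [ey, hu]
  have e2 : ey x F y₀ a h v = eY x F y₀ a h k + F (eY x F y₀ a h k) * (x v - x (a + k * h)) := by
    rcases h3.eq_or_lt with h3 | h3
    · rw [h3, ey_grid hh, eY]
    · rw [ey, eK_eq hh (h1.trans h2.le) h3]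
  rw [e1, e2]; ring

lemma euler_approx {p α K R y₀ a h c : ℝ} {x F : ℝ → ℝ} (hp : 0 < p) (hα : 0 < α) (hK : 0 ≤ K)
    (hF : ∀ u v : ℝ, |F u - F v| ≤ K * |u - v| ^ α) (hR : |y₀| ≤ R) (hh : 0 < h) (m : ℕ)
    (hc : c ≤ a + ((m + 1 : ℕ) : ℝ) * h)
    (H : pVar (ey x F y₀ a h) p a (a + m * h) ≤ ENNReal.ofReal ((R - |y₀|) ^ p)) :
    Approx x (ey x F y₀ a h) (fun t => F (ey x F y₀ a h (eσ a h m t)))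
      (fun s t => W (ey x F y₀ a h) p (eσ a h m s) (eσ a h m t)) K (α / p) (R ^ p)
      (|F 0| + K * R ^ α) a c := by
  set y := ey x F y₀ a h with hy
  have hfin : pVar y p a (a + m * h) < ⊤ := H.trans_lt ENNReal.ofReal_lt_top
  have hyc := W_ctrl hp hfin
  have hσ1 : ∀ t, a ≤ eσ a h m t := fun t => by unfold eσ; have : 0 ≤ ((min (eK a h t) m : ℕ) : ℝ) * h := by positivity
                                                linarith
  have hσ2 : ∀ t, eσ a h m t ≤ a + m * h := fun t => by
    unfold eσ; gcongr; exact min_le_right _ _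
  have hσm : ∀ s t, s ≤ t → eσ a h m s ≤ eσ a h m t := fun s t hst => by
    unfold eσ; gcongr; exact eK_mono hh hst
  have hmh : a ≤ a + m * h := (hσ1 a).trans (hσ2 a)
  have hR0 : 0 ≤ R := (abs_nonneg _).trans hR
  have hWtot : ∀ s t, a ≤ s → s ≤ t → t ≤ a + m * h → W y p s t ≤ (R - |y₀|) ^ p := by
    intro s t h1 h2 h3
    refine (hyc.mono le_rfl h1 h2 h3 le_rfl).trans ?_
    have := ENNReal.toReal_mono ENNReal.ofReal_ne_top H
    rwa [ENNReal.toReal_ofReal (Real.rpow_nonneg (by linarith) _)] at this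
  refine ⟨⟨?_, ?_⟩, ?_, ?_, ?_, ?_⟩
  · intro s t _ h2 _
    exact hyc.nonneg _ _ (hσ1 s) (hσm s t h2) (hσ2 t)
  · intro s u t _ h2 h3 _
    exact hyc.sup _ _ _ (hσ1 s) (hσm s u h2) (hσm u t h3) (hσ2 t)
  · have h1 : W y p (eσ a h m a) (eσ a h m (max a c)) ≤ (R - |y₀|) ^ p :=
      hWtot _ _ (hσ1 a) (hσm _ _ (le_max_left _ _)) (hσ2 _)
    have h2 : (R - |y₀|) ^ p ≤ R ^ p := by
      have := abs_nonneg y₀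
      exact Real.rpow_le_rpow (by linarith) (by linarith) hp.le
    by_cases hac : a ≤ c
    · rw [max_eq_right hac] at h1; exact h1.trans h2
    · have h3 : eσ a h m c = eσ a h m a := by
        have : eK a h c = 0 := by
          unfold eK; rw [Nat.floor_eq_zero]
          have : (c - a) / h ≤ 0 := div_nonpos_of_nonpos_of_nonneg (by linarith [not_le.1 hac]) hh.le
          linarith
        have h4 : eK a h a = 0 := by simp [eK]
        simp [eσ, this, h4]
      simp only [h3]
      exact (hWtot _ _ (hσ1 a) le_rfl (hσ2 a)).trans h2
  · intro s u _ h2 _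
    refine (hF _ _).trans ?_
    have e1 := W_incr hp hfin (hσ1 s) (hσm s u h2) (hσ2 u)
    have e2 := Real.rpow_le_rpow (abs_nonneg _) e1 hα.le
    have n1 := hyc.nonneg _ _ (hσ1 s) (hσm s u h2) (hσ2 u)
    rw [← Real.rpow_mul n1, show 1 / p * α = α / p by ring] at e2
    gcongr
  · intro s _ _
    have e1 := W_incr hp hfin le_rfl (hσ1 s) (hσ2 s)
    have e2 := Real.rpow_le_rpow (hyc.nonneg _ _ le_rfl (hσ1 s) (hσ2 s)) (hWtot _ _ le_rfl (hσ1 s) (hσ2 s))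
      (by positivity : 0 ≤ 1 / p)
    rw [← Real.rpow_mul (by linarith), mul_one_div_cancel hp.ne', Real.rpow_one] at e2
    have e3 : y a = y₀ := ey_a hh
    rw [e3] at e1
    have e4 : |y (eσ a h m s)| ≤ R := by
      have := abs_add_le (y (eσ a h m s) - y₀) y₀
      rw [sub_add_cancel] at this
      linarith
    have e5 := hF (y (eσ a h m s)) 0
    rw [sub_zero] at e5
    have e6 : K * |y (eσ a h m s)| ^ α ≤ K * R ^ α := by gcongr
    have e7 := abs_add_le (F (y (eσ a h m s)) - F 0) (F 0)
    rw [sub_add_cancel] at e7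
    linarith
  · intro s t h1 h2 h3
    refine ⟨fun k => max s (min t (a + k * h)), ?_, ?_, ⟨m + 1, ?_⟩, ?_, ?_⟩
    · intro i j hij
      dsimp only
      gcongr
    · simp [h1, h1.trans h2]
    · dsimp only
      rw [min_eq_left (h3.trans hc), max_eq_right h2]
    · intro k; exact max_le h2 (min_le_left _ _)
    · intro k
      dsimp only
      have hk : a + (k:ℝ) * h ≤ a + ((k + 1 : ℕ) : ℝ) * h := by push_cast; linarith
      have hmon : max s (min t (a + (k:ℝ) * h)) ≤ max s (min t (a + ((k + 1 : ℕ) : ℝ) * h)) := by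
        gcongr
      rcases hmon.eq_or_lt with he | hlt
      · rw [← he]; ring
      · have hs1 : s < a + ((k + 1 : ℕ) : ℝ) * h := by
          by_contra hcon
          push Not at hcon
          rw [max_eq_left ((min_le_right _ _).trans hcon)] at hlt
          exact absurd hlt (not_lt.2 (le_max_left _ _))
        have ht1 : a + (k:ℝ) * h < t := by
          by_contra hcon
          push Not at hcon
          rw [min_eq_left hcon] at hlt
          exact absurd hlt (not_lt.2 (max_le_max le_rfl (min_le_left _ _)))
        refine ey_cell hh (k := k) ?_ ?_ hlt ?_
        · by_contra hcon
          have : ((m + 1 : ℕ) : ℝ) ≤ (k:ℝ) := by exact_mod_cast (by omega : m + 1 ≤ k)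
          have : ((m + 1 : ℕ) : ℝ) * h ≤ (k:ℝ) * h := by gcongr
          linarith
        · rw [min_eq_right ht1.le]; exact le_max_right _ _
        · exact max_le hs1.le (min_le_right _ _)

lemma euler_pvar {p α K R y₀ a b h : ℝ} {x F : ℝ → ℝ} (hp : 0 < p) (hα : 0 < α) (hK : 0 ≤ K)
    (hθ : 1 < α / p + 1 / p)
    (hF : ∀ u v : ℝ, |F u - F v| ≤ K * |u - v| ^ α) (hR0 : 0 < R) (hR : |y₀| ≤ R) (hh : 0 < h)
    (hx : pVar x p a b < ⊤)
    (hRe : R - |y₀| = (|F 0| + K * R ^ α + sewC (α / p + 1 / p) * 2 ^ (α / p + 1 / p) * K * R ^ α)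
      * pVarNorm x p a b) (m : ℕ) (hm : a + m * h ≤ b) :
    pVar (ey x F y₀ a h) p a (a + m * h) ≤ ENNReal.ofReal ((R - |y₀|) ^ p) := by
  have hC := sewC_pos hθ
  induction m with
  | zero =>
    refine (pVar_le_ctrl (ω := fun _ _ => 0) ⟨by simp, by simp⟩ ?_).trans ?_
    · intro s t h1 h2 h3
      have : s = t := by simp at h3; linarith
      simp [this, Real.zero_rpow hp.ne']
    · simp
  | succ m ih =>
    have hm' : a + (m:ℝ) * h ≤ b := by push_cast at hm; linarith
    have hA := euler_approx hp hα hK hF hR hh m le_rfl (ih hm')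
    have hx' : pVar x p a (a + ((m + 1 : ℕ) : ℝ) * h) < ⊤ := (pVar_mono le_rfl hm).trans_lt hx
    set M := |F 0| + K * R ^ α + sewC (α / p + 1 / p) * 2 ^ (α / p + 1 / p) * K * R ^ α with hM
    have hM0 : 0 ≤ M := by positivity
    have hxc := W_ctrl hp hx'
    have hRα : (R ^ p) ^ (α / p) = R ^ α := by
      rw [← Real.rpow_mul hR0.le]; congr 1; field_simp
    refine (pVar_le_ctrl (ω := fun s t => M ^ p * W x p s t) ⟨?_, ?_⟩ ?_).trans ?_
    · intro s t h1 h2 h3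
      have := hxc.nonneg s t h1 h2 h3
      positivity
    · intro s u t h1 h2 h3 h4
      rw [← mul_add]
      have := hxc.sup s u t h1 h2 h3 h4
      gcongr
    · intro s t h1 h2 h3
      have e := approx_incr hA hK (by positivity) (by positivity) hp hθ hx' h1 h2 h3
      rw [hRα] at e
      have n := hxc.nonneg s t h1 h2 h3
      have e2 := Real.rpow_le_rpow (abs_nonneg _) e hp.le
      rwa [Real.mul_rpow hM0 (by positivity), ← Real.rpow_mul n, one_div_mul_cancel hp.ne',
        Real.rpow_one] at e2
    · refine ENNReal.ofReal_le_ofReal ?_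
      rw [hRe, Real.mul_rpow hM0 (by unfold pVarNorm; positivity), pVarNorm,
        ← Real.rpow_mul ENNReal.toReal_nonneg, one_div_mul_cancel hp.ne', Real.rpow_one]
      gcongr
      exact ENNReal.toReal_mono hx.ne (pVar_mono le_rfl hm)
/-- Proposition 1 (with the quantitative bound): there is a constant `C = C(p,α)`
such that the integral equation admits a solution `y` of finite `p`-variation with
`|y(a)| + ‖y‖_{p-var} ≤ R`, where `R` is the least positive solution of
`R = C·K·‖x‖_{p-var}·R^α + |y₀| + |F(0)|·‖x‖_{p-var}`. -/
theorem integral_equation_solution_bound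
    (p α : ℝ) (hp : 1 < p) (hp2 : p < 2) (hα1 : p - 1 < α) (hα2 : α < 1) :
    ∃ C : ℝ, 0 < C ∧ ∀ (a b : ℝ), a < b → ∀ y₀ : ℝ, ∀ x : ℝ → ℝ,
      ContinuousOn x (Set.Icc a b) → pVar x p a b < ⊤ →
      ∀ (F : ℝ → ℝ) (K : ℝ), 0 ≤ K → (∀ u v : ℝ, |F u - F v| ≤ K * |u - v| ^ α) →
      ∀ R : ℝ, 0 < R →
        R = C * K * pVarNorm x p a b * R ^ α + |y₀| + |F 0| * pVarNorm x p a b →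
        (∀ R' : ℝ, 0 < R' →
          R' = C * K * pVarNorm x p a b * R' ^ α + |y₀| + |F 0| * pVarNorm x p a b →
          R ≤ R') →
        ∃ y : ℝ → ℝ, pVar y p a b < ⊤ ∧
          (∀ t ∈ Set.Icc a b, RSIntegral (fun s => F (y s)) x a t (y t - y₀)) ∧
          |y a| + pVarNorm y p a b ≤ R := by
  have hp0 : 0 < p := by linarith
  have hα0 : 0 < α := by linarith
  have hθ : 1 < α / p + 1 / p := by
    rw [← add_div, lt_div_iff₀ hp0]; linarith
  have hC := sewC_pos hθ
  refine ⟨1 + sewC (α / p + 1 / p) * 2 ^ (α / p + 1 / p), by positivity, ?_⟩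
  intro a b hab y₀ x hxc hx F K hK hF R hR0 hRe _
  set X := pVarNorm x p a b with hX
  have hX0 : 0 ≤ X := by rw [hX]; unfold pVarNorm; positivity
  have hRe' : R - |y₀| = (|F 0| + K * R ^ α +
      sewC (α / p + 1 / p) * 2 ^ (α / p + 1 / p) * K * R ^ α) * X := by
    nth_rw 1 [hRe]; ring
  have hR : |y₀| ≤ R := by
    have : 0 ≤ R - |y₀| := by rw [hRe']; positivity
    linarith
  let h : ℕ → ℝ := fun n => (b - a) / ((n + 1 : ℕ) : ℝ)
  have hh : ∀ n, 0 < h n := fun n => div_pos (by linarith) (by positivity)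
  have hb : ∀ n, a + ((n + 1 : ℕ) : ℝ) * h n = b := fun n => by
    simp only [h]
    rw [mul_div_cancel₀ _ (by positivity)]; ring
  let Y : ℕ → ℝ → ℝ := fun n => ey x F y₀ a (h n)
  let σ : ℕ → ℝ → ℝ := fun n => eσ a (h n) (n + 1)
  let f : ℕ → ℝ → ℝ := fun n t => F (Y n (σ n t))
  let ω : ℕ → ℝ → ℝ → ℝ := fun n s t => W (Y n) p (σ n s) (σ n t)
  have hpv' : ∀ n, pVar (Y n) p a (a + ((n + 1 : ℕ) : ℝ) * h n) ≤ ENNReal.ofReal ((R - |y₀|) ^ p) :=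
    fun n => euler_pvar hp0 hα0 hK hθ hF hR0 hR (hh n) hx hRe' (n + 1) (hb n).le
  have hAp : ∀ n, Approx x (Y n) (f n) (ω n) K (α / p) (R ^ p) (|F 0| + K * R ^ α) a b := fun n =>
    euler_approx hp0 hα0 hK hF hR (hh n) (n + 1) (by
      have := hb n
      have := hh n
      push_cast at *
      linarith) (hpv' n)
  have hpv : ∀ n, pVar (Y n) p a b ≤ ENNReal.ofReal ((R - |y₀|) ^ p) := fun n => by
    have := hpv' n
    rwa [hb n] at this
  have hYa : ∀ n, Y n a = y₀ := fun n => ey_a (hh n)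
  have hbd : ∀ n, ∀ t ∈ Set.Icc a b, Y n t ∈ Set.Icc (-R) R := by
    intro n t ht
    have hfin : pVar (Y n) p a b < ⊤ := (hpv n).trans_lt ENNReal.ofReal_lt_top
    have e1 := W_incr hp0 hfin le_rfl ht.1 ht.2
    have e2 : W (Y n) p a t ≤ (R - |y₀|) ^ p := by
      have := ENNReal.toReal_mono ENNReal.ofReal_ne_top
        ((pVar_mono (g := Y n) (p := p) (le_refl a) ht.2).trans (hpv n))
      rwa [ENNReal.toReal_ofReal (Real.rpow_nonneg (by linarith) _)] at this
    have e3 := Real.rpow_le_rpow (show 0 ≤ W (Y n) p a t from ENNReal.toReal_nonneg) e2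
      (by positivity : 0 ≤ 1 / p)
    rw [← Real.rpow_mul (by linarith), mul_one_div_cancel hp0.ne', Real.rpow_one] at e3
    rw [hYa] at e1
    have := abs_add_le (Y n t - y₀) y₀
    rw [sub_add_cancel] at this
    rw [Set.mem_Icc, ← abs_le]
    linarith
  let U : Filter ℕ := (hyperfilter ℕ : Filter ℕ)
  have hU : U ≤ atTop := Nat.hyperfilter_le_atTop
  have hlim : ∀ t, ∃ l, t ∈ Set.Icc a b → Tendsto (fun n => Y n t) U (nhds l) := by
    intro t
    by_cases ht : t ∈ Set.Icc a b
    · obtain ⟨l, -, hl⟩ := (isCompact_Icc (a := -R) (b := R)).ultrafilter_le_nhds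
        ((hyperfilter ℕ).map (fun n => Y n t)) (by
          rw [Filter.le_principal_iff, Ultrafilter.coe_map]
          exact Filter.mem_map.2 (Filter.Eventually.of_forall fun n => hbd n t ht))
      exact ⟨l, fun _ => hl⟩
    · exact ⟨0, fun h => absurd h ht⟩
  choose y hy using hlim
  have hya : y a = y₀ := by
    refine tendsto_nhds_unique (hy a ⟨le_rfl, hab.le⟩) ?_
    simp only [hYa]; exact tendsto_const_nhds
  have hpy : pVar y p a b ≤ ENNReal.ofReal ((R - |y₀|) ^ p) := by
    refine pVar_le_of_forall fun n t ht hm => ?_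
    refine le_of_tendsto (f := fun k => ∑ i : Fin n,
      ENNReal.ofReal (|Y k (t i.succ) - Y k (t i.castSucc)| ^ p)) (x := U) ?_
      (Eventually.of_forall fun k => (le_pVar n t ht hm).trans (hpv k))
    refine tendsto_finsetSum _ fun i _ => ?_
    refine (ENNReal.continuous_ofReal.tendsto _).comp ?_
    exact (((hy _ (hm _)).sub (hy _ (hm _))).abs).rpow_const (Or.inr hp0.le)
  have hσ1 : ∀ n, ∀ t ∈ Set.Icc a b, σ n t = a + (eK a (h n) t : ℝ) * h n := by
    intro n t ht
    simp only [σ, eσ]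
    rw [min_eq_left]
    have e1 := eK_le (hh n) ht.1
    by_contra hcon
    have e2 : ((n + 1 : ℕ) : ℝ) < (eK a (h n) t : ℝ) := by exact_mod_cast not_le.1 hcon
    have e3 := mul_lt_mul_of_pos_right e2 (hh n)
    have := hb n
    linarith [ht.2]
  have hσI : ∀ n, ∀ t ∈ Set.Icc a b, σ n t ∈ Set.Icc a b := by
    intro n t ht
    rw [hσ1 n t ht]
    refine ⟨?_, (eK_le (hh n) ht.1).trans ht.2⟩
    have := mul_nonneg (Nat.cast_nonneg (α := ℝ) (eK a (h n) t)) (hh n).le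
    linarith
  have hh0 : Tendsto h U (nhds 0) := by
    have : Tendsto h atTop (nhds 0) :=
      (tendsto_const_div_atTop_nhds_zero_nat (b - a)).comp (tendsto_add_atTop_nat 1)
    exact this.mono_left hU
  have hσt : ∀ t ∈ Set.Icc a b, Tendsto (fun n => σ n t) U (nhds t) := by
    intro t ht
    have hl : Tendsto (fun n => t - h n) U (nhds t) := by
      simpa using tendsto_const_nhds.sub hh0
    refine tendsto_of_tendsto_of_tendsto_of_le_of_le hl tendsto_const_nhds ?_ ?_
    · intro n
      have := eK_lt (a := a) t (hh n)
      simp only [hσ1 n t ht]; linarith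
    · intro n
      simp only [hσ1 n t ht]; exact eK_le (hh n) ht.1
  have hxσ : ∀ t ∈ Set.Icc a b, Tendsto (fun n => x (σ n t)) U (nhds (x t)) := by
    intro t ht
    exact (hxc t ht).tendsto.comp (tendsto_nhdsWithin_iff.2
      ⟨hσt t ht, Eventually.of_forall fun n => hσI n t ht⟩)
  have hYσ : ∀ t ∈ Set.Icc a b, Tendsto (fun n => Y n (σ n t)) U (nhds (y t)) := by
    intro t ht
    have hd : Tendsto (fun n => Y n t - Y n (σ n t)) U (nhds 0) := by
      have hz : Tendsto (fun n => (|F 0| + K * R ^ α) * |x t - x (σ n t)|) U (nhds 0) := by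
        have := ((tendsto_const_nhds (x := x t)).sub (hxσ t ht)).abs.const_mul (|F 0| + K * R ^ α)
        simpa using this
      refine squeeze_zero_norm (fun n => ?_) hz
      have e1 : Y n t - Y n (σ n t) = f n t * (x t - x (σ n t)) := by
        have e2 : Y n (σ n t) = eY x F y₀ a (h n) (eK a (h n) t) := by
          rw [hσ1 n t ht]; exact ey_grid (hh n) _
        simp only [f]
        rw [e2, hσ1 n t ht]
        simp only [Y, ey]; ring
      rw [e1, Real.norm_eq_abs, abs_mul]
      gcongr
      exact (hAp n).bd t ht.1 ht.2
    have := (hy t ht).sub hd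
    simpa using this
  have hft : ∀ t ∈ Set.Icc a b, Tendsto (fun n => f n t) U (nhds (F (y t))) := by
    intro t ht
    rw [tendsto_iff_dist_tendsto_zero]
    have hz : Tendsto (fun n => K * |Y n (σ n t) - y t| ^ α) U (nhds 0) := by
      have h1 := ((hYσ t ht).sub_const (y t)).abs.rpow_const (p := α) (Or.inr hα0.le)
      have := h1.const_mul K
      simpa [Real.zero_rpow hα0.ne'] using this
    refine squeeze_zero (fun n => dist_nonneg) (fun n => ?_) hz
    rw [Real.dist_eq]; exact hF _ _
  refine ⟨y, hpy.trans_lt ENNReal.ofReal_lt_top, ?_, ?_⟩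
  swap
  · rw [hya]
    have e1 := ENNReal.toReal_mono ENNReal.ofReal_ne_top hpy
    rw [ENNReal.toReal_ofReal (Real.rpow_nonneg (by linarith) _)] at e1
    have e3 := Real.rpow_le_rpow ENNReal.toReal_nonneg e1 (by positivity : 0 ≤ 1 / p)
    rw [← Real.rpow_mul (by linarith), mul_one_div_cancel hp0.ne', Real.rpow_one] at e3
    unfold pVarNorm
    linarith
  -- the integral
  intro T hT ε hε
  obtain ⟨γ, hγ1, hγ2⟩ : ∃ γ, 1 - α / p < γ ∧ γ < 1 / p := exists_between (by linarith)
  have hβ1 : α / p < 1 := by rw [div_lt_one hp0]; linarith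
  have hγ0 : 0 < γ := by linarith
  have hθ' : 1 < α / p + γ := by linarith
  have hγp : γ * p < 1 := by rwa [lt_div_iff₀ hp0] at hγ2
  have hC' := sewC_pos hθ'
  set B : ℝ := R ^ p + W x p a b with hB
  have hxct := W_ctrl hp0 hx
  have hWx0 : 0 ≤ W x p a b := hxct.nonneg a b le_rfl hab.le le_rfl
  have hB0 : 0 < B := by positivity
  set Q : ℝ := (sewC (α / p + γ) + 1) * K * B ^ (α / p + γ) with hQ
  have hQ0 : 0 ≤ Q := by positivity
  set η : ℝ := (ε / (Q + 1)) ^ (1 / (1 - γ * p)) with hη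
  have hη0 : 0 < η := by positivity
  have hηQ : Q * η ^ (1 - γ * p) < ε := by
    rw [hη, ← Real.rpow_mul (by positivity), one_div_mul_cancel (by linarith), Real.rpow_one,
      ← mul_div_assoc, div_lt_iff₀ (by positivity)]
    nlinarith
  obtain ⟨δ, hδ, huc⟩ := Metric.uniformContinuousOn_iff.1
    (isCompact_Icc.uniformContinuousOn_of_continuous hxc) η hη0
  refine ⟨δ, hδ, ?_⟩
  intro n t ξ ht ht0 htl hξ hmesh
  have htI : ∀ i, t i ∈ Set.Icc a b := fun i =>
    ⟨ht0 ▸ ht.monotone (Fin.zero_le i), (htl ▸ ht.monotone (Fin.le_last i)).trans hT.2⟩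
  have hξI : ∀ i, ξ i ∈ Set.Icc a b := fun i =>
    ⟨(htI _).1.trans (hξ i).1, (hξ i).2.trans (htI _).2⟩
  have hle : ∀ i : Fin n, t i.castSucc ≤ t i.succ := fun i => ht.monotone Fin.castSucc_lt_succ.le
  have hmain : ∀ k, |∑ i : Fin n, f k (ξ i) * (x (t i.succ) - x (t i.castSucc)) - (Y k T - y₀)|
      ≤ Q * η ^ (1 - γ * p) := by
    intro k
    have htel : ∀ (g : ℝ → ℝ) (n : ℕ) (t : Fin (n + 1) → ℝ),
        ∑ i : Fin n, (g (t i.succ) - g (t i.castSucc)) = g (t (Fin.last n)) - g (t 0) := by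
      intro g n
      induction n with
      | zero => intro t; simp
      | succ n ih =>
        intro t
        rw [Fin.sum_univ_castSucc]
        have := ih (fun i => t i.castSucc)
        simp only [← Fin.succ_castSucc, Fin.castSucc_zero] at this ⊢
        rw [this]
        simp
    have e0 : Y k T - y₀ = ∑ i : Fin n, (Y k (t i.succ) - Y k (t i.castSucc)) := by
      rw [htel (Y k) n t, ht0, htl, hYa]
    rw [e0, ← Finset.sum_sub_distrib]
    have hcc : Ctrl (fun s t => ω k s t + W x p s t) a b := by
      refine ⟨fun u v hu huv hv => ?_, fun u v w hu huv hvw hw => ?_⟩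
      · exact add_nonneg ((hAp k).ctrl.nonneg u v hu huv hv) (hxct.nonneg u v hu huv hv)
      · have e1 := (hAp k).ctrl.sup u v w hu huv hvw hw
        have e2 := hxct.sup u v w hu huv hvw hw
        linarith
    have hcB : ω k a b + W x p a b ≤ B := by
      have := (hAp k).tot
      linarith
    have hterm : ∀ i : Fin n, |f k (ξ i) * (x (t i.succ) - x (t i.castSucc)) -
        (Y k (t i.succ) - Y k (t i.castSucc))| ≤
        (sewC (α / p + γ) + 1) * (K * η ^ (1 - γ * p)) * B ^ (α / p + γ - 1) *
          (ω k (t i.castSucc) (t i.succ) + W x p (t i.castSucc) (t i.succ)) := by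
      intro i
      have e := approx_rs (hAp k) hK (by positivity) hp0 hγ0 hγp.le hη0.le hθ' hx
        (htI i.castSucc).1 (hle i) (htI i.succ).2 (fun u v hu huv hv => by
          have hu' : u ∈ Set.Icc a b := ⟨(htI _).1.trans hu, (huv.trans hv).trans (htI _).2⟩
          have hv' : v ∈ Set.Icc a b := ⟨(htI _).1.trans (hu.trans huv), hv.trans (htI _).2⟩
          have := huc v hv' u hu' (by
            rw [Real.dist_eq, abs_of_nonneg (by linarith)]
            linarith [hmesh i])
          rw [Real.dist_eq] at this
          exact this.le) (hξ i).1 (hξ i).2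
      rw [abs_sub_comm]
      refine e.trans ?_
      set w := ω k (t i.castSucc) (t i.succ) + W x p (t i.castSucc) (t i.succ) with hw
      have hw0 : 0 ≤ w := hcc.nonneg _ _ (htI _).1 (hle i) (htI _).2
      have hwB : w ≤ B := (hcc.mono le_rfl (htI _).1 (hle i) (htI _).2 le_rfl).trans hcB
      have e2 : w ^ (α / p + γ) ≤ B ^ (α / p + γ - 1) * w := by
        have : w ^ (α / p + γ) = w ^ (α / p + γ - 1) * w := by
          nth_rw 3 [← Real.rpow_one w]
          rw [← Real.rpow_add_of_nonneg hw0 (by linarith) (by norm_num)]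
          congr 1; ring
        rw [this]
        have := Real.rpow_le_rpow hw0 hwB (by linarith : 0 ≤ α / p + γ - 1)
        gcongr
      rw [mul_assoc _ (B ^ _)]
      gcongr
    refine (Finset.abs_sum_le_sum_abs _ _).trans ((Finset.sum_le_sum fun i _ => hterm i).trans ?_)
    rw [← Finset.mul_sum]
    have hs := (hcc.sum_le n t ht.monotone htI).trans
      (hcc.mono le_rfl (htI 0).1 (htI 0).2 le_rfl le_rfl)
    have hBB : B ^ (α / p + γ) = B ^ (α / p + γ - 1) * B := by
      nth_rw 3 [← Real.rpow_one B]
      rw [← Real.rpow_add hB0]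
      congr 1; ring
    calc _ ≤ (sewC (α / p + γ) + 1) * (K * η ^ (1 - γ * p)) * B ^ (α / p + γ - 1) * B := by
          gcongr
          exact hs.trans hcB
      _ = _ := by rw [hQ, hBB]; ring
  refine lt_of_le_of_lt ?_ hηQ
  refine le_of_tendsto (f := fun k => |∑ i : Fin n, f k (ξ i) * (x (t i.succ) - x (t i.castSucc))
    - (Y k T - y₀)|) (x := U) ?_ (Eventually.of_forall hmain)
  refine Tendsto.abs (Tendsto.sub (tendsto_finsetSum _ fun i _ => ?_) ((hy T hT).sub_const y₀))
  exact (hft _ (hξI i)).mul_const _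
end

section
/- Let p ≥ 1 and let f : [a;b] → ℝ have finite p-variation. Then for every δ > 0, the truncated variation satisfies TV^δ(f,[a;b]) ≤ V^p(f,[a;b]) · δ^{1−p}. -/
open Filter Set

/-- Truncated variation bound via `p`-variation: `TV^δ(f,[a;b]) ≤ V^p(f,[a;b])·δ^{1−p}`. -/
theorem truncVar_le_pVar_mul_rpow
    (a b p : ℝ) (hp : 1 ≤ p) (f : ℝ → ℝ) (hf : pVar f p a b < ⊤)
    (δ : ℝ) (hδ : 0 < δ) :
    truncVar f δ a b ≤ pVar f p a b * ENNReal.ofReal (δ ^ (1 - p)) := by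
  unfold truncVar
  refine iSup_le fun n => iSup_le fun t => iSup_le fun ht => iSup_le fun hm => ?_
  have key : ∀ x : ℝ, 0 ≤ x → x - δ ≤ x ^ p * δ ^ (1 - p) := by
    intro x hx
    rcases le_or_gt x δ with h | h
    · have : 0 ≤ x ^ p * δ ^ (1 - p) := by positivity
      linarith
    · have hx0 : 0 < x := hδ.trans h
      have h1 : x ^ p * x ^ (1 - p) = x := by
        rw [← Real.rpow_add hx0]
        simp
      have h2 : x ^ (1 - p) ≤ δ ^ (1 - p) :=
        Real.rpow_le_rpow_of_nonpos hδ h.le (by linarith)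
      have h3 : x ^ p * x ^ (1 - p) ≤ x ^ p * δ ^ (1 - p) :=
        mul_le_mul_of_nonneg_left h2 (by positivity)
      linarith
  calc ∑ i : Fin n, ENNReal.ofReal (|f (t i.succ) - f (t i.castSucc)| - δ)
      ≤ ∑ i : Fin n, ENNReal.ofReal (|f (t i.succ) - f (t i.castSucc)| ^ p)
          * ENNReal.ofReal (δ ^ (1 - p)) := by
        refine Finset.sum_le_sum fun i _ => ?_
        rw [← ENNReal.ofReal_mul (by positivity)]
        exact ENNReal.ofReal_le_ofReal (key _ (abs_nonneg _))
    _ = (∑ i : Fin n, ENNReal.ofReal (|f (t i.succ) - f (t i.castSucc)| ^ p))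
          * ENNReal.ofReal (δ ^ (1 - p)) := by rw [Finset.sum_mul]
    _ ≤ pVar f p a b * ENNReal.ofReal (δ ^ (1 - p)) := by
        refine mul_le_mul_left ?_ _
        unfold pVar
        exact le_iSup_of_le n (le_iSup_of_le t (le_iSup_of_le ht (le_iSup_of_le hm le_rfl)))
end

section
/- For any functions f, h : [a;b] → ℝ and any δ ≥ 0, the truncated variation satisfies TV^δ(f + h, [a;b]) ≤ TV^δ(f, [a;b]) + TV^0(h, [a;b]), where TV^0(h,[a;b]) is the total variation of h. -/
open Filter Set

/-- Perturbation estimate: `TV^δ(f + h,[a;b]) ≤ TV^δ(f,[a;b]) + TV^0(h,[a;b])`. -/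
theorem truncVar_add_le
    (a b δ : ℝ) (hδ : 0 ≤ δ) (f h : ℝ → ℝ) :
    truncVar (fun t => f t + h t) δ a b ≤ truncVar f δ a b + truncVar h 0 a b := by
  refine iSup_le fun n => iSup_le fun t => iSup_le fun ht => iSup_le fun hm => ?_
  have h1 : ∑ i : Fin n, ENNReal.ofReal (|f (t i.succ) - f (t i.castSucc)| - δ)
      ≤ truncVar f δ a b :=
    le_iSup_of_le n (le_iSup_of_le t (le_iSup_of_le ht (le_iSup_of_le hm le_rfl)))
  have h2 : ∑ i : Fin n, ENNReal.ofReal (|h (t i.succ) - h (t i.castSucc)| - 0)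
      ≤ truncVar h 0 a b :=
    le_iSup_of_le n (le_iSup_of_le t (le_iSup_of_le ht (le_iSup_of_le hm le_rfl)))
  refine le_trans ?_ (add_le_add h1 h2)
  rw [← Finset.sum_add_distrib]
  refine Finset.sum_le_sum fun i _ => ?_
  refine le_trans (ENNReal.ofReal_le_ofReal ?_) ENNReal.ofReal_add_le
  have h3 := abs_add_le (f (t i.succ) - f (t i.castSucc)) (h (t i.succ) - h (t i.castSucc))
  have h4 : f (t i.succ) + h (t i.succ) - (f (t i.castSucc) + h (t i.castSucc))
      = (f (t i.succ) - f (t i.castSucc)) + (h (t i.succ) - h (t i.castSucc)) := by ring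
  rw [h4]
  linarith
end

section
/- Let f, g : [a;b] → ℝ be regulated functions with no common points of discontinuity, and let η > 0 and θ > 0. Then there exists h > 0 such that for every subinterval [c;d] ⊆ [a;b] with d − c ≤ h, at least one of the following holds: sup_{c≤s≤d} |f(s) − f(c)| ≤ η, or sup_{c≤s≤d} |g(d) − g(s)| ≤ θ. -/
open Filter Set

/-- For regulated `f, g` with no common points of discontinuity, on every sufficiently
short subinterval `[c;d]` either `f` oscillates from `f(c)` by at most `η`, or `g`
oscillates from `g(d)` by at most `θ`. -/
theorem small_oscillation_dichotomy
    (a b : ℝ) (hab : a < b) (f g : ℝ → ℝ)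
    (hf : Regulated f a b) (hg : Regulated g a b)
    (hfg : NoCommonDiscont f g a b)
    (η θ : ℝ) (hη : 0 < η) (hθ : 0 < θ) :
    ∃ h : ℝ, 0 < h ∧ ∀ c d : ℝ, a ≤ c → c ≤ d → d ≤ b → d - c ≤ h →
      (∀ s ∈ Set.Icc c d, |f s - f c| ≤ η) ∨ (∀ s ∈ Set.Icc c d, |g d - g s| ≤ θ) := by
  have key : ∀ x ∈ Set.Icc a b, ∃ ε > 0,
      (∀ s ∈ Set.Icc a b, dist s x < ε → |f s - f x| < η / 2) ∨
      (∀ s ∈ Set.Icc a b, dist s x < ε → |g s - g x| < θ / 2) := by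
    intro x hx
    rcases hfg x hx with h | h
    · obtain ⟨ε, hε, H⟩ := Metric.continuousWithinAt_iff.1 h (η / 2) (by positivity)
      exact ⟨ε, hε, Or.inl fun s hs hd => by simpa [Real.dist_eq] using H hs hd⟩
    · obtain ⟨ε, hε, H⟩ := Metric.continuousWithinAt_iff.1 h (θ / 2) (by positivity)
      exact ⟨ε, hε, Or.inr fun s hs hd => by simpa [Real.dist_eq] using H hs hd⟩
  choose! e he H using key
  obtain ⟨δ, hδ, L⟩ := lebesgue_number_lemma_of_metric
    (c := fun x : Set.Icc a b => Metric.ball (x : ℝ) (e x))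
    (isCompact_Icc (a := a) (b := b)) (fun _ => Metric.isOpen_ball)
    (fun x hx => Set.mem_iUnion.2 ⟨⟨x, hx⟩, Metric.mem_ball_self (he x hx)⟩)
  refine ⟨δ / 2, by positivity, fun c d hac hcd hdb hh => ?_⟩
  obtain ⟨⟨x, hx⟩, hsub⟩ := L c ⟨hac, hcd.trans hdb⟩
  have hm : ∀ s ∈ Set.Icc c d, dist s x < e x := by
    intro s hs
    apply hsub
    rw [Metric.mem_ball, Real.dist_eq, abs_of_nonneg (by linarith [hs.1])]
    linarith [hs.2]
  have hI : ∀ s ∈ Set.Icc c d, s ∈ Set.Icc a b := fun s hs =>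
    ⟨hac.trans hs.1, hs.2.trans hdb⟩
  have hc : c ∈ Set.Icc c d := ⟨le_rfl, hcd⟩
  have hd : d ∈ Set.Icc c d := ⟨hcd, le_rfl⟩
  rcases H x hx with h | h
  · left
    intro s hs
    have h1 := abs_lt.1 (h s (hI s hs) (hm s hs))
    have h2 := abs_lt.1 (h c (hI c hc) (hm c hc))
    exact abs_le.2 ⟨by linarith [h1.1, h2.2], by linarith [h1.2, h2.1]⟩
  · right
    intro s hs
    have h1 := abs_lt.1 (h s (hI s hs) (hm s hs))
    have h2 := abs_lt.1 (h d (hI d hd) (hm d hd))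
    exact abs_le.2 ⟨by linarith [h1.2, h2.1], by linarith [h1.1, h2.2]⟩
end
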